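/- For every m ≥ 2 and σ = (312) or σ = (321): the number of σ-avoiding permutations π of {1,…,m} in which the value m occurs to the left of the value m−1 equals c_{m−1}; consequently, the number of σ-avoiding permutations of {1,…,m} in which m−1 occurs to the left of m equals c_m − c_{m−1}. -/

import Mathlib

/-!
Both patterns `312` and `321` begin with their largest letter, so a permutation avoids `σ` iff
whenever two later entries lie below a common earlier entry they stand in a fixed relation `R`
(`>` for `312`, `<` for `321`); this is `Avoid R`. Every permutation of `n + 1` letters arises
uniquely by inserting a new maximum at a position `i` of a permutation `p` of `n` letters
(`ins i p`), and the result avoids `σ` iff `p` does and the part of `p` from position `i` on is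
`R`-monotone (`avoid_ins`).

Let `F n t` (`suffixCount`) be the number of avoiders of length `n` that are `R`-monotone from
position `t` on. In both cases insertion of the maximum gives
`F (n+1) t = ∑_{i ≤ min t n} F n i`, the recursion of the Catalan triangle, whose solution is
`F n t = binom (n+t) n - binom (n+t) (n+1)`; hence the avoiders are counted by
`F n n = catalan n`.

For the permutations of length `n + 2` with the maximum left of the second largest value,
insert the two largest values in turn, the smaller at position `j` of `q` and the larger at
position `i ≤ j`. For `312` avoidance then forces `i = j`; for `321` it forces `j = n`, with `q`
increasing from `i` on. Either way the count is `∑_{i ≤ n} F n i = F (n+1) (n+1)`.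
-/

open Equiv

/-- `π` is a transversal of the Young diagram with row lengths `b` (zero-indexed:
the row at height `h` has `b h` cells, i.e. column `i` (1-indexed `i+1`) lies in that row
iff `(i:ℕ)+1 ≤ b h`). -/
def IsTransversal {n : ℕ} (b : Fin n → ℕ) (π : Equiv.Perm (Fin n)) : Prop :=
  ∀ i : Fin n, (i : ℕ) + 1 ≤ b (π i)

/-- The transversal `π` contains the pattern `τ` inside the Young diagram `b`:
there are columns `f 0 < f 1 < …` whose dots are in the relative order prescribed by `τ`
and all rows and columns through these dots intersect inside the diagram. -/
def ContainsIn {n k : ℕ} (b : Fin n → ℕ) (π : Equiv.Perm (Fin n))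
    (τ : Equiv.Perm (Fin k)) : Prop :=
  ∃ f : Fin k → Fin n, StrictMono f ∧
    (∀ s t : Fin k, τ s < τ t ↔ π (f s) < π (f t)) ∧
    (∀ s t : Fin k, (f s : ℕ) + 1 ≤ b (π (f t)))

/-- `|S_Y(τ)|`: the number of transversals of the Young diagram `b` avoiding `τ` in `Y`. -/
noncomputable def SYcard {n k : ℕ} (b : Fin n → ℕ) (τ : Equiv.Perm (Fin k)) : ℕ :=
  Nat.card {π : Equiv.Perm (Fin n) // IsTransversal b π ∧ ¬ ContainsIn b π τ}

/-- Classical pattern containment for permutations. -/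
def ContainsPat {n k : ℕ} (π : Equiv.Perm (Fin n)) (τ : Equiv.Perm (Fin k)) : Prop :=
  ∃ f : Fin k → Fin n, StrictMono f ∧ ∀ s t : Fin k, τ s < τ t ↔ π (f s) < π (f t)

/-- `|S_n(τ)|`: the number of permutations of length `n` avoiding `τ`. -/
noncomputable def SnCard (n : ℕ) {k : ℕ} (τ : Equiv.Perm (Fin k)) : ℕ :=
  Nat.card {π : Equiv.Perm (Fin n) // ¬ ContainsPat π τ}

def p123 : Equiv.Perm (Fin 3) := Equiv.refl _
def p213 : Equiv.Perm (Fin 3) :=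
  ⟨![1, 0, 2], ![1, 0, 2], by intro x; fin_cases x <;> rfl, by intro x; fin_cases x <;> rfl⟩
def p312 : Equiv.Perm (Fin 3) :=
  ⟨![2, 0, 1], ![1, 2, 0], by intro x; fin_cases x <;> rfl, by intro x; fin_cases x <;> rfl⟩
def p321 : Equiv.Perm (Fin 3) :=
  ⟨![2, 1, 0], ![2, 1, 0], by intro x; fin_cases x <;> rfl, by intro x; fin_cases x <;> rfl⟩

/-- `(σ|τ)`: the block sum with the block of `σ` before and entirely above the block of `τ`. -/
def blockSum {m k : ℕ} (σ : Equiv.Perm (Fin m)) (τ : Equiv.Perm (Fin k)) :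
    Equiv.Perm (Fin (m + k)) :=
  finSumFinEquiv.symm.trans ((((Equiv.sumCongr σ τ).trans
    (Equiv.sumComm (Fin m) (Fin k))).trans finSumFinEquiv).trans
    (finCongr (Nat.add_comm k m)))

/-- `|S_{↘Y}(τ)|`: avoiders whose two leftmost entries are decreasing. -/
noncomputable def SYcardLeftDesc {m k : ℕ} (b : Fin m → ℕ) (τ : Equiv.Perm (Fin k)) : ℕ :=
  Nat.card {π : Equiv.Perm (Fin m) // IsTransversal b π ∧ ¬ ContainsIn b π τ ∧
    ∀ i j : Fin m, (i : ℕ) = 0 → (j : ℕ) = 1 → π j < π i}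

/-- `|S_{↗Y}(τ)|`: avoiders whose two leftmost entries are increasing. -/
noncomputable def SYcardLeftAsc {m k : ℕ} (b : Fin m → ℕ) (τ : Equiv.Perm (Fin k)) : ℕ :=
  Nat.card {π : Equiv.Perm (Fin m) // IsTransversal b π ∧ ¬ ContainsIn b π τ ∧
    ∀ i j : Fin m, (i : ℕ) = 0 → (j : ℕ) = 1 → π i < π j}

/-- `|S^{↘}_Y(τ)|`: avoiders in which the value `m` occurs to the left of the value `m-1`. -/
noncomputable def SYcardTopDesc {m k : ℕ} (b : Fin m → ℕ) (τ : Equiv.Perm (Fin k)) : ℕ :=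
  Nat.card {π : Equiv.Perm (Fin m) // IsTransversal b π ∧ ¬ ContainsIn b π τ ∧
    ∀ u v : Fin m, (u : ℕ) + 1 = m → (v : ℕ) + 2 = m → π⁻¹ u < π⁻¹ v}

/-- `|S^{↗}_Y(τ)|`: avoiders in which the value `m-1` occurs to the left of the value `m`. -/
noncomputable def SYcardTopAsc {m k : ℕ} (b : Fin m → ℕ) (τ : Equiv.Perm (Fin k)) : ℕ :=
  Nat.card {π : Equiv.Perm (Fin m) // IsTransversal b π ∧ ¬ ContainsIn b π τ ∧
    ∀ u v : Fin m, (u : ℕ) + 1 = m → (v : ℕ) + 2 = m → π⁻¹ v < π⁻¹ u}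

/-! ### Avoidance and insertion of the maximum -/

/-- Any two entries of `π` that lie to the right of and below a common entry are related by `R`.
For `R = (· > ·)` this is avoidance of `312`, for `R = (· < ·)` avoidance of `321`. -/
def Avoid (R : ℕ → ℕ → Prop) {n : ℕ} (π : Equiv.Perm (Fin n)) : Prop :=
  ∀ a b c : Fin n, a < b → b < c → π b < π a → π c < π a → R (π b) (π c)

/-- The entries of `π` at the (zero-based) positions `≥ t` form an `R`-monotone sequence. -/
def MonoFrom (R : ℕ → ℕ → Prop) (t : ℕ) {n : ℕ} (π : Equiv.Perm (Fin n)) : Prop :=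
  ∀ a b : Fin n, t ≤ a → a < b → R (π a) (π b)

/-- The number of avoiders of length `n` that are `R`-monotone from position `t` on. -/
noncomputable def suffixCount (R : ℕ → ℕ → Prop) (n t : ℕ) : ℕ :=
  Nat.card {π : Equiv.Perm (Fin n) // Avoid R π ∧ MonoFrom R t π}

/-- Insertion of a new maximum at position `i`. -/
def ins {n : ℕ} (i : Fin (n + 1)) (p : Equiv.Perm (Fin n)) : Equiv.Perm (Fin (n + 1)) :=
  (finSuccEquiv' i).trans ((Equiv.optionCongr p).trans (finSuccEquiv' (Fin.last n)).symm)

@[simp] lemma ins_self {n : ℕ} (i : Fin (n + 1)) (p : Equiv.Perm (Fin n)) :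
    ins i p i = Fin.last n := by
  simp [ins]

@[simp] lemma ins_succAbove {n : ℕ} (i : Fin (n + 1)) (p : Equiv.Perm (Fin n)) (j : Fin n) :
    ins i p (i.succAbove j) = (p j).castSucc := by
  simp [ins]

lemma ins_bijective (n : ℕ) :
    Function.Bijective (fun x : Fin (n + 1) × Equiv.Perm (Fin n) => ins x.1 x.2) := by
  rw [Fintype.bijective_iff_injective_and_card]
  refine ⟨?_, by simp [Fintype.card_perm, Nat.factorial_succ]⟩
  rintro ⟨i, p⟩ ⟨j, q⟩ h
  simp only at h
  have hij : i = j := by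
    apply (ins j q).injective
    rw [ins_self, ← h, ins_self]
  subst hij
  refine Prod.ext rfl (Equiv.ext fun a => ?_)
  have := congrArg (fun e => e (i.succAbove a)) h
  simpa using this

lemma card_perm_succ {n : ℕ} (P : Equiv.Perm (Fin (n + 1)) → Prop) :
    Nat.card {π // P π} = ∑ i : Fin (n + 1), Nat.card {p : Equiv.Perm (Fin n) // P (ins i p)} := by
  rw [← Nat.card_sigma]
  refine (Nat.card_congr ?_).symm
  refine Equiv.ofBijective (fun x => ⟨ins x.1 x.2.1, x.2.2⟩) ⟨?_, ?_⟩
  · rintro ⟨i, p, hp⟩ ⟨j, q, hq⟩ h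
    have := (ins_bijective n).1 (a₁ := (i, p)) (a₂ := (j, q)) (congrArg Subtype.val h)
    simp only [Prod.mk.injEq] at this
    obtain ⟨rfl, rfl⟩ := this
    rfl
  · rintro ⟨π, hπ⟩
    obtain ⟨⟨i, p⟩, rfl⟩ := (ins_bijective n).2 π
    exact ⟨⟨i, p, hπ⟩, rfl⟩

/-- Inserting the maximum at `i` keeps avoidance exactly when the entries after it, which all lie
below the new maximum, are `R`-monotone. -/
lemma avoid_ins (R : ℕ → ℕ → Prop) {n : ℕ} (i : Fin (n + 1)) (p : Equiv.Perm (Fin n)) :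
    Avoid R (ins i p) ↔ Avoid R p ∧ MonoFrom R i p := by
  constructor
  · intro h
    refine ⟨fun a b c hab hbc hba hca => ?_, fun a b hia hab => ?_⟩
    · have := h (i.succAbove a) (i.succAbove b) (i.succAbove c) (by simpa) (by simpa)
        (by simpa) (by simpa)
      simpa using this
    · have := h i (i.succAbove a) (i.succAbove b)
        (Fin.lt_succAbove_iff_le_castSucc _ _ |>.2 hia) (by simpa)
        (by simp [Fin.castSucc_lt_last]) (by simp [Fin.castSucc_lt_last])
      simpa using this
  · rintro ⟨hp, hm⟩ a b c hab hbc hba hca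
    have hb : b ≠ i := by
      rintro rfl
      rw [ins_self] at hba
      exact absurd hba (not_lt.2 (Fin.le_last _))
    have hc : c ≠ i := by
      rintro rfl
      rw [ins_self] at hca
      exact absurd hca (not_lt.2 (Fin.le_last _))
    obtain ⟨b, rfl⟩ := Fin.exists_succAbove_eq hb
    obtain ⟨c, rfl⟩ := Fin.exists_succAbove_eq hc
    rw [Fin.succAbove_lt_succAbove_iff] at hbc
    simp only [ins_succAbove, Fin.val_castSucc]
    by_cases ha : a = i
    · subst ha
      exact hm b c ((Fin.lt_succAbove_iff_le_castSucc _ _).1 hab) hbc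
    · obtain ⟨a, rfl⟩ := Fin.exists_succAbove_eq ha
      simp only [Fin.succAbove_lt_succAbove_iff, ins_succAbove, Fin.castSucc_lt_castSucc_iff]
        at hab hba hca
      exact hp a b c hab hbc hba hca

/-- When the maximum is put at the front of a decreasing suffix, the longest decreasing suffix of
the result starts at the maximum. -/
lemma monoFrom_ins_gt {n : ℕ} (t : ℕ) (i : Fin (n + 1)) (p : Equiv.Perm (Fin n))
    (hm : MonoFrom (· > ·) i p) : MonoFrom (· > ·) t (ins i p) ↔ (i : ℕ) ≤ t := by
  constructor
  · intro h
    by_contra hlt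
    have hti : t < n + 1 := by omega
    have h1 := h ⟨t, hti⟩ i le_rfl (by rw [Fin.lt_def]; simpa using hlt)
    rw [ins_self] at h1
    have := (ins i p ⟨t, hti⟩).is_lt
    simp only [Fin.val_last] at h1
    omega
  · intro hit a b hta hab
    have hb : b ≠ i := by
      rintro rfl
      rw [Fin.lt_def] at hab
      omega
    obtain ⟨b, rfl⟩ := Fin.exists_succAbove_eq hb
    by_cases ha : a = i
    · subst ha
      simp
    · obtain ⟨a, rfl⟩ := Fin.exists_succAbove_eq ha
      rw [Fin.succAbove_lt_succAbove_iff] at hab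
      simp only [ins_succAbove, Fin.val_castSucc]
      refine hm a b ?_ hab
      by_contra hai
      rw [Fin.succAbove_of_castSucc_lt _ _ (by rw [Fin.lt_def]; simpa using hai)] at hta
      simp only [Fin.val_castSucc] at hta
      omega

/-- An increasing suffix of the result can contain the new maximum only as its last entry; so it
either starts behind the maximum, or the maximum was appended at the very end. -/
lemma monoFrom_ins_lt {n : ℕ} (t : ℕ) (i : Fin (n + 1)) (p : Equiv.Perm (Fin n))
    (hm : MonoFrom (· < ·) i p) :
    MonoFrom (· < ·) t (ins i p) ↔ (i : ℕ) < t ∨ (i = Fin.last n ∧ MonoFrom (· < ·) t p) := by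
  constructor
  · intro h
    by_contra! hcon
    obtain ⟨hti, hcon⟩ := hcon
    by_cases hi : i = Fin.last n
    · refine hcon hi fun a b hta hab => ?_
      subst hi
      have := h ((Fin.last n).succAbove a) ((Fin.last n).succAbove b) (by simpa) (by simpa)
      simpa only [ins_succAbove, Fin.val_castSucc] using this
    · have h1 := h i (Fin.last n) hti (lt_of_le_of_ne (Fin.le_last _) hi)
      rw [ins_self] at h1
      have := (ins i p (Fin.last n)).is_lt
      simp only [Fin.val_last] at h1
      omega
  · rintro (hit | ⟨rfl, hp⟩) a b hta hab
    · have ha : a ≠ i := by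
        rintro rfl
        omega
      have hb : b ≠ i := by
        rintro rfl
        rw [Fin.lt_def] at hab
        omega
      obtain ⟨a, rfl⟩ := Fin.exists_succAbove_eq ha
      obtain ⟨b, rfl⟩ := Fin.exists_succAbove_eq hb
      rw [Fin.succAbove_lt_succAbove_iff] at hab
      simp only [ins_succAbove, Fin.val_castSucc]
      refine hm a b ?_ hab
      by_contra hai
      rw [Fin.succAbove_of_castSucc_lt _ _ (by rw [Fin.lt_def]; simpa using hai)] at hta
      simp only [Fin.val_castSucc] at hta
      omega
    · have ha : a ≠ Fin.last n := (lt_of_lt_of_le hab (Fin.le_last _)).ne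
      obtain ⟨a, rfl⟩ := Fin.exists_succAbove_eq ha
      by_cases hb : b = Fin.last n
      · subst hb
        simp only [ins_succAbove, ins_self, Fin.val_castSucc, Fin.val_last, Fin.is_lt]
      · obtain ⟨b, rfl⟩ := Fin.exists_succAbove_eq hb
        rw [Fin.succAbove_lt_succAbove_iff] at hab
        simp only [ins_succAbove, Fin.val_castSucc]
        exact hp a b (by simpa using hta) hab

/-! ### The Catalan triangle -/

lemma card_and_const {α : Type*} (P Q : α → Prop) (c : Prop) [Decidable c]
    (h : ∀ a, Q a ↔ P a ∧ c) :
    Nat.card {a // Q a} = if c then Nat.card {a // P a} else 0 := by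
  by_cases hc : c
  · simp [h, hc]
  · simp [h, hc]

lemma sum_fin_le (f : ℕ → ℕ) {n t : ℕ} (ht : t ≤ n) :
    ∑ i : Fin (n + 1), (if (i : ℕ) ≤ t then f i else 0) = ∑ i ∈ Finset.range (t + 1), f i := by
  rw [Fin.sum_univ_eq_sum_range (fun i => if i ≤ t then f i else 0), ← Finset.sum_filter]
  congr 1
  ext i
  simp only [Finset.mem_filter, Finset.mem_range]
  omega

lemma monoFrom_of_le (R : ℕ → ℕ → Prop) {n t : ℕ} (π : Equiv.Perm (Fin n)) (h : n ≤ t) :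
    MonoFrom R t π := fun a _ hta _ => absurd a.is_lt (by omega)

lemma suffixCount_self (R : ℕ → ℕ → Prop) (n : ℕ) :
    suffixCount R n n = Nat.card {π : Equiv.Perm (Fin n) // Avoid R π} := by
  simp [suffixCount, monoFrom_of_le]

lemma suffixCount_zero (R : ℕ → ℕ → Prop) : suffixCount R 0 0 = 1 := by
  have : ∀ π : Equiv.Perm (Fin 0), Avoid R π ∧ MonoFrom R 0 π :=
    fun π => ⟨fun a => a.elim0, fun a => a.elim0⟩
  simp [suffixCount, this]

lemma suffixCount_succ_self (R : ℕ → ℕ → Prop) (n : ℕ) :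
    suffixCount R (n + 1) (n + 1) = ∑ i ∈ Finset.range (n + 1), suffixCount R n i := by
  rw [suffixCount_self, card_perm_succ, ← Fin.sum_univ_eq_sum_range]
  simp only [avoid_ins]
  rfl

lemma suffixCount_succ_gt {n t : ℕ} (ht : t ≤ n) :
    suffixCount (· > ·) (n + 1) t = ∑ i ∈ Finset.range (t + 1), suffixCount (· > ·) n i := by
  rw [suffixCount, card_perm_succ, ← sum_fin_le _ ht]
  refine Finset.sum_congr rfl fun i _ => card_and_const _ _ _ fun p => ?_
  rw [avoid_ins]
  exact and_congr_right fun h => monoFrom_ins_gt t i p h.2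

lemma suffixCount_succ_lt {n t : ℕ} (ht : t ≤ n) :
    suffixCount (· < ·) (n + 1) t = ∑ i ∈ Finset.range (t + 1), suffixCount (· < ·) n i := by
  -- Insertion at a position `i < t` contributes `F n i`; insertion at the end contributes `F n t`.
  have key : ∀ i : Fin (n + 1),
      Nat.card {p : Equiv.Perm (Fin n) // Avoid (· < ·) (ins i p) ∧ MonoFrom (· < ·) t (ins i p)}
        = (if (i : ℕ) < t then suffixCount (· < ·) n i else 0)
          + (if i = Fin.last n then suffixCount (· < ·) n t else 0) := by
    intro i
    by_cases hit : (i : ℕ) < t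
    · have hi : i ≠ Fin.last n := by
        rintro rfl
        simp at hit
        omega
      rw [if_pos hit, if_neg hi, add_zero, suffixCount]
      refine Nat.card_congr (Equiv.subtypeEquivRight fun p => ?_)
      rw [avoid_ins]
      constructor
      · exact fun h => h.1
      · exact fun h => ⟨h, (monoFrom_ins_lt t i p h.2).2 (Or.inl hit)⟩
    · rw [if_neg hit, zero_add]
      refine card_and_const _ _ _ fun p => ?_
      rw [avoid_ins]
      constructor
      · rintro ⟨h, h'⟩
        obtain h' | h' := (monoFrom_ins_lt t i p h.2).1 h'
        · exact absurd h' hit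
        · exact ⟨⟨h.1, h'.2⟩, h'.1⟩
      · rintro ⟨h, rfl⟩
        have hm : MonoFrom (· < ·) (Fin.last n : ℕ) p := monoFrom_of_le _ _ (by simp)
        exact ⟨⟨h.1, hm⟩, (monoFrom_ins_lt t _ p hm).2 (Or.inr ⟨rfl, h.2⟩)⟩
  rw [suffixCount, card_perm_succ, Finset.sum_congr rfl fun i _ => key i, Finset.sum_add_distrib,
    Finset.sum_ite_eq' Finset.univ (Fin.last n), if_pos (Finset.mem_univ _),
    Finset.sum_range_succ]
  congr 1
  rw [Fin.sum_univ_eq_sum_range (fun i => if i < t then suffixCount (· < ·) n i else 0),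
    ← Finset.sum_filter]
  congr 1
  ext i
  simp only [Finset.mem_filter, Finset.mem_range]
  omega

/-- The recursion of the Catalan triangle has the ballot numbers as its solution. -/
lemma triangle_closed_form (F : ℕ → ℕ → ℕ) (h0 : F 0 0 = 1)
    (h1 : ∀ n t, t ≤ n → F (n + 1) t = ∑ i ∈ Finset.range (t + 1), F n i)
    (h2 : ∀ n, F (n + 1) (n + 1) = ∑ i ∈ Finset.range (n + 1), F n i) :
    ∀ n t, t ≤ n → F n t + (n + t).choose (n + 1) = (n + t).choose n := by
  intro n
  induction n with
  | zero =>
    intro t ht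
    obtain rfl : t = 0 := by omega
    simp [h0]
  | succ n ih =>
    have inner : ∀ t, t ≤ n →
        F (n + 1) t + (n + 1 + t).choose (n + 1 + 1) = (n + 1 + t).choose (n + 1) := by
      intro t
      induction t with
      | zero =>
        intro _
        have := ih 0 (Nat.zero_le _)
        simp only [add_zero, Nat.choose_succ_self, Nat.choose_self] at this ⊢
        rw [h1 n 0 (Nat.zero_le _)]
        simpa using this
      | succ t iht =>
        intro ht
        have e1 := iht (by omega)
        have e2 := ih (t + 1) ht
        rw [h1 n t (by omega)] at e1
        rw [h1 n (t + 1) ht, Finset.sum_range_succ]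
        have p1 := Nat.choose_succ_succ' (n + 1 + t) (n + 1)
        have p2 := Nat.choose_succ_succ' (n + 1 + t) n
        rw [show n + (t + 1) = n + 1 + t by ring] at e2
        rw [show n + 1 + (t + 1) = n + 1 + t + 1 by ring]
        omega
    intro t ht
    obtain ht | rfl : t ≤ n ∨ t = n + 1 := by omega
    · exact inner t ht
    · have e := inner n le_rfl
      rw [h1 n n le_rfl, ← h2 n] at e
      have p1 := Nat.choose_succ_succ' (n + 1 + n) (n + 1)
      have p2 := Nat.choose_succ_succ' (n + 1 + n) n
      have s : (n + 1 + n).choose n = (n + 1 + n).choose (n + 1) :=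
        Nat.choose_symm_of_eq_add (by ring)
      rw [show n + 1 + (n + 1) = n + 1 + n + 1 by ring]
      omega

lemma triangle_diag (F : ℕ → ℕ → ℕ) (h0 : F 0 0 = 1)
    (h1 : ∀ n t, t ≤ n → F (n + 1) t = ∑ i ∈ Finset.range (t + 1), F n i)
    (h2 : ∀ n, F (n + 1) (n + 1) = ∑ i ∈ Finset.range (n + 1), F n i) (n : ℕ) :
    F n n = catalan n := by
  have h := triangle_closed_form F h0 h1 h2 n n le_rfl
  have hc := succ_mul_catalan_eq_centralBinom n
  have hs := Nat.choose_succ_right_eq (n + n) n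
  rw [Nat.centralBinom_eq_two_mul_choose, two_mul] at hc
  rw [Nat.add_sub_cancel] at hs
  apply Nat.eq_of_mul_eq_mul_left (Nat.succ_pos n)
  rw [Nat.succ_eq_add_one, hc]
  nlinarith

/-! ### The order of the two largest values -/

lemma ins_inv_last {n : ℕ} (i : Fin (n + 1)) (p : Equiv.Perm (Fin n)) :
    (ins i p)⁻¹ (Fin.last n) = i := by
  rw [Equiv.Perm.inv_eq_iff_eq, ins_self]

/-- After the insertion of the two largest values at `j` and then at `i`, the larger one comes
first iff `i ≤ j`. -/
lemma top_desc_ins {n : ℕ} (i : Fin (n + 2)) (j : Fin (n + 1)) (q : Equiv.Perm (Fin n)) :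
    (ins i (ins j q))⁻¹ (Fin.last (n + 1)) < (ins i (ins j q))⁻¹ (Fin.last n).castSucc ↔
      i ≤ j.castSucc := by
  have : (ins i (ins j q))⁻¹ (Fin.last n).castSucc = i.succAbove j := by
    rw [Equiv.Perm.inv_eq_iff_eq, ins_succAbove, ins_self]
  rw [ins_inv_last, this, Fin.lt_succAbove_iff_le_castSucc]

lemma top_desc_gt (n : ℕ) :
    Nat.card {π : Equiv.Perm (Fin (n + 2)) // Avoid (· > ·) π ∧
      π⁻¹ (Fin.last (n + 1)) < π⁻¹ (Fin.last n).castSucc} = suffixCount (· > ·) (n + 1) (n + 1) := by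
  rw [card_perm_succ]
  simp only [card_perm_succ (n := n)]
  rw [Finset.sum_comm, suffixCount_succ_self, ← Fin.sum_univ_eq_sum_range]
  refine Finset.sum_congr rfl fun j _ => ?_
  -- The larger value has to be put immediately before the smaller one.
  rw [Finset.sum_congr rfl fun (i : Fin (n + 2)) _ =>
    card_and_const (fun q : Equiv.Perm (Fin n) => Avoid (· > ·) q ∧ MonoFrom (· > ·) j q) _
      (i = j.castSucc) ?_]
  · rw [Finset.sum_ite_eq' Finset.univ j.castSucc, if_pos (Finset.mem_univ _)]
    rfl
  · intro q
    rw [top_desc_ins, avoid_ins, avoid_ins, and_assoc]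
    refine and_congr_right fun h => ?_
    rw [monoFrom_ins_gt _ _ _ h.2, Fin.ext_iff, Fin.le_def, Fin.val_castSucc]
    omega

lemma top_desc_lt (n : ℕ) :
    Nat.card {π : Equiv.Perm (Fin (n + 2)) // Avoid (· < ·) π ∧
      π⁻¹ (Fin.last (n + 1)) < π⁻¹ (Fin.last n).castSucc} = suffixCount (· < ·) (n + 1) (n + 1) := by
  rw [card_perm_succ]
  simp only [card_perm_succ (n := n)]
  rw [suffixCount_succ_self, ← Fin.sum_univ_eq_sum_range]
  -- The smaller value has to be put at the very end, `j = n`; this excludes `i = n + 1`.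
  have key : ∀ (i : Fin (n + 2)) (j : Fin (n + 1)) (q : Equiv.Perm (Fin n)),
      (Avoid (· < ·) (ins i (ins j q)) ∧ (ins i (ins j q))⁻¹ (Fin.last (n + 1)) <
        (ins i (ins j q))⁻¹ (Fin.last n).castSucc) ↔
      (Avoid (· < ·) q ∧ MonoFrom (· < ·) i q) ∧ (j = Fin.last n ∧ i ≠ Fin.last (n + 1)) := by
    intro i j q
    rw [top_desc_ins, avoid_ins, avoid_ins, Fin.le_def, Fin.val_castSucc]
    constructor
    · rintro ⟨⟨⟨hq, hj⟩, hi⟩, hij⟩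
      obtain h | ⟨h, h'⟩ := (monoFrom_ins_lt _ _ _ hj).1 hi
      · omega
      · refine ⟨⟨hq, h'⟩, h, ?_⟩
        rintro rfl
        simp only [Fin.val_last] at hij
        omega
    · rintro ⟨⟨hq, hi⟩, rfl, hne⟩
      have hm : MonoFrom (· < ·) (Fin.last n : ℕ) q := monoFrom_of_le _ _ (by simp)
      refine ⟨⟨⟨hq, hm⟩, (monoFrom_ins_lt _ _ _ hm).2 (Or.inr ⟨rfl, hi⟩)⟩, ?_⟩
      have := Fin.val_lt_last hne
      simp only [Fin.val_last]
      omega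
  simp only [card_and_const _ _ _ (key _ _)]
  rw [Fin.sum_univ_castSucc]
  simp [suffixCount, Fin.castSucc_ne_last]

/-! ### Translation to pattern containment -/

lemma not_containsPat_iff {n : ℕ} (π : Equiv.Perm (Fin n)) (σ : Equiv.Perm (Fin 3))
    (R : ℕ → ℕ → Prop) (h0 : σ 0 = 2)
    (hR : ∀ x y : Fin n, x ≠ y → (¬ R x y ↔ (σ 1 < σ 2 ↔ x < y))) :
    ¬ ContainsPat π σ ↔ Avoid R π := by
  have h10 : σ 1 < σ 0 := by
    have : σ 1 ≠ σ 0 := σ.injective.ne (by decide)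
    omega
  have h20 : σ 2 < σ 0 := by
    have : σ 2 ≠ σ 0 := σ.injective.ne (by decide)
    omega
  have h12 : σ 1 ≠ σ 2 := σ.injective.ne (by decide)
  constructor
  · intro h a b c hab hbc hba hca
    by_contra hr
    have hbc' : π b ≠ π c := π.injective.ne hbc.ne
    have := (hR _ _ hbc').1 hr
    refine h ⟨![a, b, c], ?_, ?_⟩
    · rw [Fin.strictMono_iff_lt_succ]
      intro i
      fin_cases i
      · exact hab
      · exact hbc
    · intro s t
      fin_cases s <;> fin_cases t <;> simp <;> omega
  · rintro h ⟨f, hf, hp⟩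
    have h01 := hf (show (0 : Fin 3) < 1 by decide)
    have h12' := hf (show (1 : Fin 3) < 2 by decide)
    exact (hR _ _ (π.injective.ne h12'.ne)).2 (hp 1 2)
      (h _ _ _ h01 h12' ((hp 1 0).1 h10) ((hp 2 0).1 h20))

lemma counts_of_top_desc (n : ℕ) (A : Equiv.Perm (Fin (n + 2)) → Prop)
    (hA : Nat.card {π // A π} = catalan (n + 2))
    (hD : Nat.card {π // A π ∧ π⁻¹ (Fin.last (n + 1)) < π⁻¹ (Fin.last n).castSucc} =
      catalan (n + 1)) :
    Nat.card {π : Equiv.Perm (Fin (n + 2)) // A π ∧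
        ∀ u v : Fin (n + 2), (u : ℕ) + 1 = n + 2 → (v : ℕ) + 2 = n + 2 → π⁻¹ u < π⁻¹ v} =
      catalan (n + 2 - 1) ∧
    Nat.card {π : Equiv.Perm (Fin (n + 2)) // A π ∧
        ∀ u v : Fin (n + 2), (u : ℕ) + 1 = n + 2 → (v : ℕ) + 2 = n + 2 → π⁻¹ v < π⁻¹ u} =
      catalan (n + 2) - catalan (n + 2 - 1) := by
  have huv : ∀ P : Fin (n + 2) → Fin (n + 2) → Prop,
      (∀ u v : Fin (n + 2), (u : ℕ) + 1 = n + 2 → (v : ℕ) + 2 = n + 2 → P u v) ↔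
        P (Fin.last (n + 1)) (Fin.last n).castSucc := by
    intro P
    constructor
    · intro h
      exact h _ _ (by simp) (by simp)
    · intro h u v hu hv
      obtain rfl : u = Fin.last (n + 1) := Fin.ext (by simp; omega)
      obtain rfl : v = (Fin.last n).castSucc := Fin.ext (by simp; omega)
      exact h
  have e1 := fun π : Equiv.Perm (Fin (n + 2)) => huv (fun u v => π⁻¹ u < π⁻¹ v)
  have e2 := fun π : Equiv.Perm (Fin (n + 2)) => huv (fun u v => π⁻¹ v < π⁻¹ u)
  simp only [e1, e2]
  refine ⟨hD, ?_⟩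
  have hne : ∀ π : Equiv.Perm (Fin (n + 2)),
      π⁻¹ (Fin.last (n + 1)) ≠ π⁻¹ (Fin.last n).castSucc := fun π =>
    π⁻¹.injective.ne (Fin.castSucc_ne_last _).symm
  classical
  rw [Nat.card_eq_fintype_card, Fintype.card_subtype] at hA hD ⊢
  rw [show n + 2 - 1 = n + 1 from rfl, ← hA, ← hD]
  rw [← Finset.card_filter_add_card_filter_not (s := Finset.univ.filter A)
    (fun π => π⁻¹ (Fin.last (n + 1)) < π⁻¹ (Fin.last n).castSucc), Finset.filter_filter,
    Finset.filter_filter, Nat.add_sub_cancel_left]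
  congr 1
  ext π
  simp only [Finset.mem_filter, Finset.mem_univ, true_and, not_lt]
  exact and_congr_right fun _ => ⟨le_of_lt, fun h => lt_of_le_of_ne h (hne π).symm⟩

theorem stmt9 (m : ℕ) (hm : 2 ≤ m) (σ : Equiv.Perm (Fin 3)) (hσ : σ = p312 ∨ σ = p321) :
    Nat.card {π : Equiv.Perm (Fin m) // ¬ ContainsPat π σ ∧
        ∀ u v : Fin m, (u : ℕ) + 1 = m → (v : ℕ) + 2 = m → π⁻¹ u < π⁻¹ v} =
      catalan (m - 1) ∧
    Nat.card {π : Equiv.Perm (Fin m) // ¬ ContainsPat π σ ∧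
        ∀ u v : Fin m, (u : ℕ) + 1 = m → (v : ℕ) + 2 = m → π⁻¹ v < π⁻¹ u} =
      catalan m - catalan (m - 1) := by
  obtain ⟨n, rfl⟩ : ∃ n, m = n + 2 := ⟨m - 2, by omega⟩
  obtain rfl | rfl := hσ
  · have hav : ∀ π : Equiv.Perm (Fin (n + 2)), ¬ ContainsPat π p312 ↔ Avoid (· > ·) π := by
      intro π
      refine not_containsPat_iff π p312 _ rfl fun x y hxy => ?_
      have : p312 1 < p312 2 := by decide
      simp only [this, true_iff]
      omega
    have hcat := triangle_diag (suffixCount (· > ·)) (suffixCount_zero _)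
      (fun _ _ => suffixCount_succ_gt) (suffixCount_succ_self _)
    simp only [hav]
    exact counts_of_top_desc n _ (by rw [← suffixCount_self, hcat]) (by rw [top_desc_gt, hcat])
  · have hav : ∀ π : Equiv.Perm (Fin (n + 2)), ¬ ContainsPat π p321 ↔ Avoid (· < ·) π := by
      intro π
      refine not_containsPat_iff π p321 _ rfl fun x y hxy => ?_
      have : ¬ p321 1 < p321 2 := by decide
      simp only [this, false_iff]
      omega
    have hcat := triangle_diag (suffixCount (· < ·)) (suffixCount_zero _)
      (fun _ _ => suffixCount_succ_lt) (suffixCount_succ_self _)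
    simp only [hav]
    exact counts_of_top_desc n _ (by rw [← suffixCount_self, hcat]) (by rw [top_desc_lt, hcat])
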